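/- arXiv:math/0412026 — 3 statements merged into one kernel-verified Lean document; each statement's English description precedes it below -/
import Mathlib

section
/- Let d ≥ 1 and let M be a countable module over R_d. The algebraic ℤ^d-action α_M on the Pontryagin dual X_M is mixing with respect to the normalized Haar measure λ_{X_M} if and only if for every prime ideal p associated with M, the set {u^n − 1 : n ∈ ℤ^d} intersects p only in {0} (equivalently, u^n − 1 ∈ p implies n = 0). -/
/-!
Let `χ_a : x ↦ x(a)` denote the character of `X_M` given by evaluation at `a ∈ M`, so that
`χ_a ∘ α_M(n) = χ_{u^n a}`. Both conditions are equivalent to: no nonzero `a ∈ M` is fixed by a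
nontrivial monomial `u^n`.

*Associated primes.* If `p = ann(a)` contains `u^n - 1`, then `a ≠ 0` and `u^n a = a`. Conversely,
`R_d` is Noetherian, so if `u^n a = a` with `a ≠ 0` then `ann(a)` lies in an associated prime, which
therefore contains `u^n - 1` (`eq_zero_of_monomial_smul_eq`).

*No fixed elements implies mixing.* For `b ≠ 0` and any `a`, there is at most one `n` with
`u^n b = a` (`finite_monomial_smul_eq`). The characters are orthonormal in `L²(X_M)`
(`inner_charLp`; this needs enough homomorphisms `M → Circle` to separate points of `M`), hence
`⟪χ_a, χ_b ∘ α_M(n)⟫ → ⟪χ_a, 1⟫ ⟪1, χ_b⟫` along the cofinite filter. By Stone-Weierstrass the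
characters span a dense subspace of `L²(X_M)` (`span_charLp_dense`), and since the Koopman operators
are isometries the convergence extends to all of `L²(X_M)` (`mixing_of_dense_span`). Indicator
functions of Borel sets give mixing.

*Mixing implies no fixed elements.* If `u^n a = a` with `n ≠ 0` and `a ≠ 0`, then `x ↦ x(a)` is
invariant under `α_M(kn)` for all `k ∈ ℕ`. It takes two distinct values, so pulling back disjoint
open sets gives two nonempty open sets, of positive Haar measure, each disjoint from every preimage
of the other under `α_M(kn)`; this contradicts mixing along the infinite set `{kn}` (`eq_zero_of_mixing`).
-/

open MeasureTheory

/-- `R_d = ℤ[u₁^{±1},…,u_d^{±1}]`, the Laurent polynomial ring in `d` variables,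
realized as the group algebra of `ℤ^d` over `ℤ`.  For `n ∈ ℤ^d` the monomial `u^n`
is `AddMonoidAlgebra.single n 1`. -/
abbrev Rd (d : ℕ) : Type := AddMonoidAlgebra ℤ (Fin d → ℤ)

/-- The Pontryagin dual `X_M` of the (discrete) abelian group `M`: the compact abelian
group of characters of `M`. -/
abbrev dualX (M : Type) [AddCommGroup M] [TopologicalSpace M] : Type :=
  PontryaginDual (Multiplicative M)

/-- The algebraic `ℤ^d`-action `α_M` on `X_M` dual to multiplication by monomials:
`(α_M(n) χ)(a) = χ(u^n · a)`. -/
noncomputable def alphaAct (d : ℕ) (M : Type) [AddCommGroup M] [TopologicalSpace M]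
    [DiscreteTopology M] [Module (Rd d) M] (n : Fin d → ℤ) (x : dualX M) : dualX M :=
  ContinuousMonoidHom.comp x
    ⟨AddMonoidHom.toMultiplicative
        (DistribMulAction.toAddMonoidHom M (AddMonoidAlgebra.single n (1 : ℤ) : Rd d)),
      continuous_of_discreteTopology⟩

noncomputable instance (M : Type) [AddCommGroup M] [TopologicalSpace M] :
    MeasurableSpace (dualX M) := borel _

instance (M : Type) [AddCommGroup M] [TopologicalSpace M] : BorelSpace (dualX M) := ⟨rfl⟩

/-! ### Monomials fixing elements of a module over the Laurent polynomial ring -/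

/-- If no associated prime contains a nontrivial `u^n - 1`, then only the trivial monomial fixes a
nonzero element: `ann(a)` is contained in an associated prime as `R_d` is Noetherian. -/
theorem eq_zero_of_monomial_smul_eq {d : ℕ} {M : Type} [AddCommGroup M] [Module (Rd d) M]
    (h : ∀ p ∈ associatedPrimes (Rd d) M,
      ∀ n : Fin d → ℤ, AddMonoidAlgebra.single n 1 - 1 ∈ p → n = 0)
    {a : M} (ha : a ≠ 0) {n : Fin d → ℤ}
    (hn : (AddMonoidAlgebra.single n (1 : ℤ) : Rd d) • a = a) : n = 0 := by
  have : IsNoetherianRing (Rd d) := Algebra.FiniteType.isNoetherianRing ℤ (Rd d)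
  obtain ⟨p, hp, hle⟩ := exists_le_isAssociatedPrime_of_isNoetherianRing (Rd d) a ha
  refine h p hp n (hle ?_)
  rw [Submodule.mem_colon_singleton, Submodule.mem_bot, sub_smul, hn, one_smul, sub_self]

theorem single_add_smul {d : ℕ} {M : Type} [AddCommGroup M] [Module (Rd d) M]
    (m n : Fin d → ℤ) (a : M) :
    (AddMonoidAlgebra.single (m + n) (1 : ℤ) : Rd d) • a =
      (AddMonoidAlgebra.single m (1 : ℤ) : Rd d) •
        (AddMonoidAlgebra.single n (1 : ℤ) : Rd d) • a := by
  rw [smul_smul, AddMonoidAlgebra.single_mul_single, one_mul]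

theorem single_zero_smul {d : ℕ} {M : Type} [AddCommGroup M] [Module (Rd d) M] (a : M) :
    (AddMonoidAlgebra.single (0 : Fin d → ℤ) (1 : ℤ) : Rd d) • a = a := by
  rw [← AddMonoidAlgebra.one_def, one_smul]

theorem finite_monomial_smul_eq {d : ℕ} {M : Type} [AddCommGroup M] [Module (Rd d) M]
    (h : ∀ p ∈ associatedPrimes (Rd d) M,
      ∀ n : Fin d → ℤ, AddMonoidAlgebra.single n 1 - 1 ∈ p → n = 0)
    (a : M) {b : M} (hb : b ≠ 0) :
    {n : Fin d → ℤ | (AddMonoidAlgebra.single n (1 : ℤ) : Rd d) • b = a}.Finite := by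
  refine Set.Subsingleton.finite fun m hm n hn => ?_
  rw [Set.mem_ofPred_eq] at hm hn
  have : -n + m = 0 := by
    refine eq_zero_of_monomial_smul_eq h hb ?_
    rw [single_add_smul, hm, ← hn, ← single_add_smul, neg_add_cancel, single_zero_smul]
  exact (neg_add_eq_zero.mp this).symm

/-! ### Characters of the dual group -/

/-- Characters separate the points of `M`. Divisibility of `ℚ/ℤ` provides a character into `ℚ/ℤ`,
which is then embedded into the circle through `ℝ/ℤ`. -/
theorem exists_dualX_apply_ne_one {M : Type} [AddCommGroup M] [TopologicalSpace M]
    [DiscreteTopology M] {a : M} (ha : a ≠ 0) :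
    ∃ x : dualX M, x (Multiplicative.ofAdd a) ≠ 1 := by
  obtain ⟨c, hc⟩ := CharacterModule.exists_character_apply_ne_zero_of_ne_zero ha
  let j : AddCircle (1 : ℚ) →+ AddCircle (1 : ℝ) :=
    QuotientAddGroup.map _ _ (Rat.castHom ℝ : ℚ →+ ℝ) (by
      rw [AddSubgroup.zmultiples_le]
      exact AddSubgroup.mem_comap.mpr (by simp))
  have hj : ∀ t, j t = 0 → t = 0 := by
    intro t
    induction t using QuotientAddGroup.induction_on with
    | H q =>
      intro hq
      have hq' : ((q : ℝ) : AddCircle (1 : ℝ)) = 0 := hq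
      rw [AddCircle.coe_eq_zero_iff] at hq'
      obtain ⟨k, hk⟩ := hq'
      refine (AddCircle.coe_eq_zero_iff (1 : ℚ)).mpr ⟨k, ?_⟩
      simp only [zsmul_eq_mul, mul_one] at hk ⊢
      exact_mod_cast hk
  let f : Multiplicative M →* Circle :=
    { toFun := fun m => AddCircle.toCircle (j (c m.toAdd))
      map_one' := by simp
      map_mul' := fun m n => by simp [AddCircle.toCircle_add] }
  refine ⟨(⟨f, continuous_of_discreteTopology⟩ : Multiplicative M →ₜ* Circle), fun h => hc (hj _ ?_)⟩
  refine AddCircle.injective_toCircle one_ne_zero ?_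
  rw [AddCircle.toCircle_zero]
  exact h

theorem continuous_dualX_apply {M : Type} [AddCommGroup M] [TopologicalSpace M]
    (a : Multiplicative M) : Continuous fun x : dualX M => x a :=
  (continuous_eval_const a : Continuous fun x : Multiplicative M →ₜ* Circle => x a)

theorem alphaAct_apply {d : ℕ} {M : Type} [AddCommGroup M] [TopologicalSpace M]
    [DiscreteTopology M] [Module (Rd d) M] (n : Fin d → ℤ) (x : dualX M) (a : M) :
    alphaAct d M n x (Multiplicative.ofAdd a) =
      x (Multiplicative.ofAdd ((AddMonoidAlgebra.single n (1 : ℤ) : Rd d) • a)) := rfl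

/-- The evaluation character `χ_a : x ↦ x(a)` of `X_M`, as a continuous function. -/
noncomputable def evalChar {M : Type} [AddCommGroup M] [TopologicalSpace M] (a : M) :
    C(dualX M, ℂ) :=
  ⟨fun x => (x (Multiplicative.ofAdd a) : ℂ),
    continuous_subtype_val.comp (continuous_dualX_apply _)⟩

theorem evalChar_apply {M : Type} [AddCommGroup M] [TopologicalSpace M] (a : M) (x : dualX M) :
    evalChar a x = (x (Multiplicative.ofAdd a) : ℂ) := rfl

theorem evalChar_zero {M : Type} [AddCommGroup M] [TopologicalSpace M] :
    evalChar (0 : M) = 1 := by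
  ext x; simp [evalChar_apply]

theorem evalChar_add {M : Type} [AddCommGroup M] [TopologicalSpace M] (a b : M) :
    evalChar (a + b) = evalChar a * evalChar b := by
  ext x; simp [evalChar_apply]

theorem evalChar_neg {M : Type} [AddCommGroup M] [TopologicalSpace M] (a : M) :
    evalChar (-a) = star (evalChar a) := by
  ext x; simp [evalChar_apply, ← Circle.coe_inv_eq_conj]

/-- Stone-Weierstrass: the linear span of the evaluation characters is a star subalgebra of
`C(X_M, ℂ)`, and it separates points because a point of `X_M` is determined by its values. -/
theorem span_evalChar_dense (M : Type) [AddCommGroup M] [TopologicalSpace M]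
    [DiscreteTopology M] :
    (Submodule.span ℂ (Set.range (evalChar (M := M)))).topologicalClosure = ⊤ := by
  let A : StarSubalgebra ℂ C(dualX M, ℂ) :=
    { toSubalgebra := Algebra.adjoin ℂ (Set.range (evalChar (M := M)))
      star_mem' := by
        change Algebra.adjoin ℂ (Set.range (evalChar (M := M))) ≤
          star (Algebra.adjoin ℂ (Set.range (evalChar (M := M))))
        refine Algebra.adjoin_le ?_
        rintro - ⟨a, rfl⟩
        exact Algebra.subset_adjoin ⟨-a, evalChar_neg a⟩ }
  have hA : Subalgebra.toSubmodule A.toSubalgebra =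
      Submodule.span ℂ (Set.range (evalChar (M := M))) := by
    apply Algebra.adjoin_eq_span_of_subset
    refine Set.Subset.trans ?_ Submodule.subset_span
    intro x hx
    refine Submonoid.closure_induction (fun _ => id) ⟨0, evalChar_zero⟩ ?_ hx
    rintro - - - - ⟨a, rfl⟩ ⟨b, rfl⟩
    exact ⟨a + b, evalChar_add a b⟩
  have hsep : A.SeparatesPoints := by
    intro x y hxy
    by_contra! hcon
    refine hxy (PontryaginDual.ext fun a => ?_)
    exact Circle.coe_injective
      (hcon _ ⟨evalChar a.toAdd, Algebra.subset_adjoin ⟨_, rfl⟩, rfl⟩)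
  rw [← hA]
  exact congr_arg (Subalgebra.toSubmodule <| StarSubalgebra.toSubalgebra ·)
    (ContinuousMap.starSubalgebra_topologicalClosure_eq_top_of_separatesPoints A hsep)

theorem secondCountable_dualX (M : Type) [AddCommGroup M] [TopologicalSpace M]
    [DiscreteTopology M] [Countable M] : SecondCountableTopology (dualX M) :=
  have : Countable (Multiplicative M) := ‹Countable M›
  (ContinuousMonoidHom.isInducing_toContinuousMap (Multiplicative M) Circle).secondCountableTopology

theorem continuous_alphaAct (d : ℕ) (M : Type) [AddCommGroup M] [TopologicalSpace M]
    [DiscreteTopology M] [Module (Rd d) M] (n : Fin d → ℤ) : Continuous (alphaAct d M n) :=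
  ContinuousMonoidHom.continuous_comp_left _

/-- `α_M(n)` preserves the Haar measure, being a continuous surjective endomorphism of a compact
group. -/
theorem measurePreserving_alphaAct (d : ℕ) (M : Type) [AddCommGroup M] [Countable M]
    [TopologicalSpace M] [DiscreteTopology M] [Module (Rd d) M]
    (μ : Measure (dualX M)) [μ.IsHaarMeasure] [IsProbabilityMeasure μ] (n : Fin d → ℤ) :
    MeasurePreserving (alphaAct d M n) μ μ := by
  have := secondCountable_dualX M
  let f : dualX M →* dualX M :=
    { toFun := alphaAct d M n
      map_one' := rfl
      map_mul' := fun x y => rfl }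
  refine f.measurePreserving (continuous_alphaAct d M n) (fun x => ⟨alphaAct d M (-n) x, ?_⟩) rfl
  refine PontryaginDual.ext fun a => ?_
  change x (Multiplicative.ofAdd ((AddMonoidAlgebra.single (-n) (1 : ℤ) : Rd d) •
    (AddMonoidAlgebra.single n (1 : ℤ) : Rd d) • a.toAdd)) = _
  rw [← single_add_smul, neg_add_cancel, single_zero_smul]
  rfl

/-- A nontrivial character has integral zero: translating by a point `y` with `χ_a(y) ≠ 1`
multiplies the integral by `χ_a(y)`. -/
theorem integral_evalChar {M : Type} [AddCommGroup M] [TopologicalSpace M]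
    [DiscreteTopology M] (μ : Measure (dualX M)) [μ.IsHaarMeasure] {a : M} (ha : a ≠ 0) :
    ∫ x, evalChar a x ∂μ = 0 := by
  obtain ⟨y, hy⟩ := exists_dualX_apply_ne_one ha
  have h := integral_mul_left_eq_self (μ := μ) (fun x => evalChar a x) y
  have h' : ∀ x : dualX M, evalChar a (y * x) = evalChar a y * evalChar a x := fun x => by
    simp only [evalChar_apply]
    rw [← Circle.coe_mul]
    rfl
  simp only [h', integral_const_mul] at h
  by_contra hne
  exact hy (Circle.coe_injective (by simpa [evalChar_apply] using (mul_eq_right₀ hne).mp h))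

/-! ### Extending convergence from a set with dense span -/

theorem tendsto_zero_of_dense_span {ι H : Type*} [NormedAddCommGroup H] [NormedSpace ℂ H]
    {l : Filter ι} (T : ι → H →L[ℂ] ℂ) (C : ℝ) (hC : ∀ i, ‖T i‖ ≤ C) (S : Set H)
    (hS : (Submodule.span ℂ S).topologicalClosure = ⊤)
    (hT : ∀ v ∈ S, Filter.Tendsto (fun i => T i v) l (nhds 0)) (v : H) :
    Filter.Tendsto (fun i => T i v) l (nhds 0) := by
  have hspan : ∀ w ∈ Submodule.span ℂ S, Filter.Tendsto (fun i => T i w) l (nhds 0) := by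
    intro w hw
    induction hw using Submodule.span_induction with
    | mem w hw => exact hT w hw
    | zero => simpa using tendsto_const_nhds
    | add w z _ _ hw hz => simpa using hw.add hz
    | smul c w _ hw => simpa using hw.const_mul c
  have hv : v ∈ closure (Submodule.span ℂ S : Set H) := by
    rw [← Submodule.topologicalClosure_coe, hS]; trivial
  rw [Metric.tendsto_nhds]
  intro ε hε
  have hC' : 0 < |C| + 1 := by positivity
  obtain ⟨w, hw, hvw⟩ := Metric.mem_closure_iff.mp hv (ε / 2 / (|C| + 1)) (by positivity)
  filter_upwards [Metric.tendsto_nhds.mp (hspan w hw) (ε / 2) (by positivity)] with i hi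
  rw [dist_zero_right] at hi ⊢
  have h1 : ‖T i (v - w)‖ ≤ ε / 2 := by
    calc ‖T i (v - w)‖ ≤ ‖T i‖ * ‖v - w‖ := (T i).le_opNorm _
      _ ≤ (|C| + 1) * (ε / 2 / (|C| + 1)) := by
          rw [dist_eq_norm] at hvw
          gcongr
          linarith [hC i, le_abs_self C]
      _ = ε / 2 := by field_simp
  calc ‖T i v‖ = ‖T i (v - w) + T i w‖ := by simp
    _ ≤ ‖T i (v - w)‖ + ‖T i w‖ := norm_add_le _ _
    _ < ε := by linarith

/-- For linear isometries `U i`, the convergence `⟪f, U i g⟫ → ⟪f, e⟫ ⟪e, g⟫` extends from `f, g` in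
a set with dense span to all vectors, first in `g` and then in `f`. -/
theorem mixing_of_dense_span {ι H : Type*} [NormedAddCommGroup H] [InnerProductSpace ℂ H]
    {l : Filter ι} (U : ι → H →ₗᵢ[ℂ] H) (e : H) (S : Set H)
    (hS : (Submodule.span ℂ S).topologicalClosure = ⊤)
    (hU : ∀ f ∈ S, ∀ g ∈ S, Filter.Tendsto (fun i => inner ℂ f (U i g)) l
      (nhds (inner ℂ f e * inner ℂ e g))) (f g : H) :
    Filter.Tendsto (fun i => inner ℂ f (U i g)) l (nhds (inner ℂ f e * inner ℂ e g)) := by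
  have step1 : ∀ f ∈ S, ∀ g : H, Filter.Tendsto (fun i => inner ℂ f (U i g)) l
      (nhds (inner ℂ f e * inner ℂ e g)) := by
    intro f hf g
    rw [← tendsto_sub_nhds_zero_iff]
    refine tendsto_zero_of_dense_span
      (fun i => (innerSL ℂ f).comp (U i).toContinuousLinearMap - inner ℂ f e • innerSL ℂ e)
      (‖f‖ + ‖(inner ℂ f e : ℂ)‖ * ‖e‖) (fun i => ?_) S hS (fun g hg => ?_) g
    · refine (norm_sub_le _ _).trans (add_le_add ?_ ?_)
      · refine (ContinuousLinearMap.opNorm_comp_le _ _).trans ?_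
        rw [innerSL_apply_norm]
        exact mul_le_of_le_one_right (norm_nonneg _) (U i).norm_toContinuousLinearMap_le
      · rw [norm_smul, innerSL_apply_norm]
    · exact tendsto_sub_nhds_zero_iff.mpr (hU f hf g hg)
  -- The pairing is conjugate-linear in `f`, so the extension in `f` is done for its conjugate.
  have key : Filter.Tendsto (fun i => inner ℂ (U i g) f) l
      (nhds (inner ℂ g e * inner ℂ e f)) := by
    rw [← tendsto_sub_nhds_zero_iff]
    refine tendsto_zero_of_dense_span
      (fun i => innerSL ℂ (U i g) - inner ℂ g e • innerSL ℂ e)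
      (‖g‖ + ‖(inner ℂ g e : ℂ)‖ * ‖e‖) (fun i => ?_) S hS (fun f hf => ?_) f
    · refine (norm_sub_le _ _).trans (add_le_add ?_ ?_)
      · rw [innerSL_apply_norm, (U i).norm_map]
      · rw [norm_smul, innerSL_apply_norm]
    · refine tendsto_sub_nhds_zero_iff.mpr ?_
      have := (Complex.continuous_conj.tendsto _).comp (step1 f hf g)
      simpa [Function.comp_def, mul_comm] using this
  have := (Complex.continuous_conj.tendsto _).comp key
  simpa [Function.comp_def, mul_comm] using this

/-! ### The orthonormal system of characters in the space of square-integrable functions -/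

section L2

variable {M : Type} [AddCommGroup M] [TopologicalSpace M] [DiscreteTopology M]
  (μ : Measure (dualX M)) [IsProbabilityMeasure μ]

/-- The class of the character `χ_a` in `L²(X_M)`. -/
noncomputable def charLp [Countable M] (a : M) : Lp ℂ 2 μ :=
  haveI := secondCountable_dualX M
  ContinuousMap.toLp (E := ℂ) 2 μ ℂ (evalChar a)

theorem coeFn_charLp [Countable M] (a : M) : charLp μ a =ᵐ[μ] evalChar a :=
  haveI := secondCountable_dualX M
  ContinuousMap.coeFn_toLp μ (evalChar a)

theorem inner_charLp [Countable M] [μ.IsHaarMeasure] (a b : M) [Decidable (a = b)] :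
    inner ℂ (charLp μ a) (charLp μ b) = if a = b then (1 : ℂ) else 0 := by
  have h : inner ℂ (charLp μ a) (charLp μ b) = ∫ x, evalChar (b - a) x ∂μ := by
    rw [L2.inner_def]
    refine integral_congr_ae ?_
    filter_upwards [coeFn_charLp μ a, coeFn_charLp μ b] with x ha hb
    rw [ha, hb, sub_eq_add_neg, evalChar_add, evalChar_neg]
    simp
  rw [h]
  split_ifs with hab
  · simp [hab, evalChar_zero]
  · exact integral_evalChar μ (sub_ne_zero.mpr (Ne.symm hab))

theorem span_charLp_dense [Countable M] :
    (Submodule.span ℂ (Set.range (charLp μ))).topologicalClosure = ⊤ := by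
  have := secondCountable_dualX M
  convert!
    (ContinuousMap.toLp_denseRange ℂ μ ℂ (p := 2) (by simp)).topologicalClosure_map_submodule
      (span_evalChar_dense M)
  rw [Submodule.map_span, ← Set.range_comp]
  rfl

end L2

/-! ### Mixing and fixed elements -/

section Main

variable (d : ℕ) (M : Type) [AddCommGroup M] [Countable M]
  [TopologicalSpace M] [DiscreteTopology M] [Module (Rd d) M]
  (μ : Measure (dualX M)) [μ.IsHaarMeasure] [IsProbabilityMeasure μ]

/-- The Koopman operator `f ↦ f ∘ α_M(n)` on `L²(X_M)`. -/
noncomputable def koopman (n : Fin d → ℤ) : Lp ℂ 2 μ →ₗᵢ[ℂ] Lp ℂ 2 μ :=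
  Lp.compMeasurePreservingₗᵢ ℂ (alphaAct d M n) (measurePreserving_alphaAct d M μ n)

theorem koopman_charLp (n : Fin d → ℤ) (a : M) :
    koopman d M μ n (charLp μ a) =
      charLp μ ((AddMonoidAlgebra.single n (1 : ℤ) : Rd d) • a) := rfl

theorem mixing_of_associatedPrimes
    (h : ∀ p ∈ associatedPrimes (Rd d) M,
      ∀ n : Fin d → ℤ, AddMonoidAlgebra.single n 1 - 1 ∈ p → n = 0)
    {A B : Set (dualX M)} (hA : MeasurableSet A) (hB : MeasurableSet B) :
    Filter.Tendsto (fun n : Fin d → ℤ => μ (A ∩ alphaAct d M n ⁻¹' B))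
      Filter.cofinite (nhds (μ A * μ B)) := by
  classical
  have hmix := mixing_of_dense_span (l := Filter.cofinite) (koopman d M μ) (charLp μ 0)
    (Set.range (charLp μ)) (span_charLp_dense μ) (by
      rintro - ⟨a, rfl⟩ - ⟨b, rfl⟩
      simp only [koopman_charLp, inner_charLp]
      by_cases hb : b = 0
      · subst hb
        simpa using tendsto_const_nhds
      · rw [if_neg (Ne.symm hb), mul_zero]
        refine tendsto_const_nhds.congr' ?_
        filter_upwards [(finite_monomial_smul_eq h a hb).compl_mem_cofinite] with n hn
        exact (if_neg (Ne.symm hn)).symm)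
    (indicatorConstLp 2 hA (measure_ne_top μ A) 1) (indicatorConstLp 2 hB (measure_ne_top μ B) 1)
  have hone : charLp μ 0 = indicatorConstLp 2 MeasurableSet.univ (measure_ne_top μ _) 1 := by
    refine Lp.ext ?_
    filter_upwards [coeFn_charLp μ (0 : M), indicatorConstLp_coeFn (p := 2) (μ := μ)
      (hs := MeasurableSet.univ) (hμs := measure_ne_top μ _) (c := (1 : ℂ))] with x h1 h2
    rw [h1, h2, evalChar_zero]
    simp
  have hk : ∀ n, koopman d M μ n (indicatorConstLp 2 hB (measure_ne_top μ B) 1) =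
      indicatorConstLp 2 ((continuous_alphaAct d M n).measurable hB) (measure_ne_top μ _) 1 :=
    fun n => rfl
  simp only [hk, hone, L2.inner_indicatorConstLp_one_indicatorConstLp_one, Set.inter_univ,
    Set.univ_inter] at hmix
  have hre : Filter.Tendsto (fun n : Fin d → ℤ => μ.real (A ∩ alphaAct d M n ⁻¹' B))
      Filter.cofinite (nhds (μ.real A * μ.real B)) := by
    have := (Complex.continuous_re.tendsto _).comp hmix
    simpa [Function.comp_def] using this
  rw [← ENNReal.tendsto_toReal_iff (fun n => measure_ne_top μ _)
    (ENNReal.mul_ne_top (measure_ne_top μ _) (measure_ne_top μ _)), ENNReal.toReal_mul]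
  exact hre

end Main

theorem eq_zero_of_mixing (d : ℕ) (M : Type) [AddCommGroup M]
    [TopologicalSpace M] [DiscreteTopology M] [Module (Rd d) M]
    (μ : Measure (dualX M)) [μ.IsHaarMeasure]
    (hmix : ∀ A B : Set (dualX M), MeasurableSet A → MeasurableSet B →
      Filter.Tendsto (fun n : Fin d → ℤ => μ (A ∩ alphaAct d M n ⁻¹' B))
        Filter.cofinite (nhds (μ A * μ B)))
    {a : M} (ha : a ≠ 0) {n : Fin d → ℤ}
    (hn : (AddMonoidAlgebra.single n (1 : ℤ) : Rd d) • a = a) : n = 0 := by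
  by_contra hn0
  -- Evaluation at `a` takes the distinct values `y a` at `y` and `1` at the trivial character.
  obtain ⟨y, hy⟩ := exists_dualX_apply_ne_one ha
  obtain ⟨V, W, hV, hW, hyV, h1W, hVW⟩ := t2_separation hy
  let ev : dualX M → Circle := fun x => x (Multiplicative.ofAdd a)
  have hev : Continuous ev := continuous_dualX_apply _
  have hpow : ∀ k : ℕ, (AddMonoidAlgebra.single (k • n) (1 : ℤ) : Rd d) • a = a := by
    intro k
    induction k with
    | zero => rw [zero_smul, single_zero_smul]
    | succ k ih => rw [succ_nsmul, single_add_smul, hn, ih]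
  have hinj : Function.Injective fun k : ℕ => k • n := by
    intro k l hkl
    obtain ⟨i, hi⟩ := Function.ne_iff.mp hn0
    have := congr_fun hkl i
    exact (by simpa using this : k = l ∨ n i = 0).resolve_right hi
  have hlim := (hmix _ _ (hV.preimage hev).measurableSet (hW.preimage hev).measurableSet).comp
    (Nat.cofinite_eq_atTop ▸ hinj.tendsto_cofinite)
  have hempty : ∀ k : ℕ, ev ⁻¹' V ∩ alphaAct d M (k • n) ⁻¹' (ev ⁻¹' W) = ∅ := by
    intro k
    have : alphaAct d M (k • n) ⁻¹' (ev ⁻¹' W) = ev ⁻¹' W := by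
      ext x
      simp only [Set.mem_preimage, ev, alphaAct_apply, hpow]
    rw [this, ← Set.preimage_inter, hVW.inter_eq, Set.preimage_empty]
  simp only [Function.comp_def, hempty, measure_empty] at hlim
  have hzero := tendsto_nhds_unique hlim tendsto_const_nhds
  refine mul_ne_zero ?_ ?_ hzero
  · exact ((hV.preimage hev).measure_pos μ ⟨y, hyV⟩).ne'
  · exact ((hW.preimage hev).measure_pos μ ⟨1, h1W⟩).ne'

/-- Let `d ≥ 1` and let `M` be a countable `R_d`-module (with the
discrete topology).  The dual `ℤ^d`-action `α_M` on `X_M` is mixing with respect to the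
normalized Haar measure `μ` on `X_M` (i.e. `μ(A ∩ α_M(n)⁻¹ B) → μ(A)·μ(B)` as `n → ∞`
along the cofinite filter on `ℤ^d`) if and only if for every prime ideal `p` associated
with `M` and every `n ∈ ℤ^d`, `u^n − 1 ∈ p` implies `n = 0`. -/
theorem stmt0 (d : ℕ) (hd : 1 ≤ d) (M : Type) [AddCommGroup M] [Countable M]
    [TopologicalSpace M] [DiscreteTopology M] [Module (Rd d) M]
    (μ : Measure (dualX M)) [μ.IsHaarMeasure] [IsProbabilityMeasure μ] :
    (∀ A B : Set (dualX M), MeasurableSet A → MeasurableSet B →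
      Filter.Tendsto (fun n : Fin d → ℤ => μ (A ∩ alphaAct d M n ⁻¹' B))
        Filter.cofinite (nhds (μ A * μ B))) ↔
      ∀ p ∈ associatedPrimes (Rd d) M,
        ∀ n : Fin d → ℤ, AddMonoidAlgebra.single n 1 - 1 ∈ p → n = 0 := by
  refine ⟨fun hmix p hp n hn => ?_, fun h A B hA hB => mixing_of_associatedPrimes d M μ h hA hB⟩
  have : IsNoetherianRing (Rd d) := Algebra.FiniteType.isNoetherianRing ℤ (Rd d)
  obtain ⟨hprime, a, rfl⟩ := isAssociatedPrime_iff.mp hp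
  rw [Submodule.mem_colon_singleton, Submodule.mem_bot, sub_smul, one_smul, sub_eq_zero] at hn
  refine eq_zero_of_mixing d M μ hmix ?_ hn
  rintro rfl
  exact hprime.ne_top (by simp)
end

section
/- Let M be a Noetherian module over R_2 = ℤ[u₁^{±1}, u₂^{±1}] such that every prime ideal p associated with M is non-principal and satisfies {u^n − 1 : n ∈ ℤ²} ∩ p = {0}. Then M modulo its torsion subgroup is isomorphic, as an abelian group, to a subgroup of ℚ^n for some n ≥ 0; equivalently, ℚ ⊗_ℤ M is a finite-dimensional ℚ-vector space. (This expresses that the connected component of the identity of the dual group X_M is a finite-dimensional connected compact abelian group.) -/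
/-!
The ring `R₂` is a localization of the factorial ring `ℤ[u₁, u₂]`, so a non-principal prime `q`
contracts to a prime of `ℤ[u₁, u₂]` that properly contains `(π)` for some prime element `π`. If
`q` contains no nonzero integer, this chain survives in `ℚ[u₁, u₂]`, which has Krull dimension two,
so the contraction of `q` generates a maximal ideal there (`isMaximal_of_comap_not_principal`). By
Zariski's lemma the residue field is finite over `ℚ`, and `R₂ / q` embeds in it; if `q` does
contain a nonzero integer, then `ℚ ⊗ R₂ / q = 0`. Either way `ℚ ⊗ R₂ / q` is finite-dimensional
(`finiteDimensional_quotient`).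

A finitely generated module `M` is filtered with quotients `R₂ / p`, where `p` runs through primes
in the support of `M` (`finiteDimensional_of_support`). Each such `p` contains a minimal prime of
the annihilator of `M`. That minimal prime `q` is associated with `M`, hence non-principal, and
`R₂ / p` is a quotient of `R₂ / q`. Since `ℚ ⊗ -` is exact, the result follows.
-/

open TensorProduct

/-- `R₂ = ℤ[u₁^{±1}, u₂^{±1}]`, the Laurent polynomial ring in two variables,
realized as the group algebra of `ℤ²` over `ℤ`.  For `n ∈ ℤ²` the monomial `u^n`
is `AddMonoidAlgebra.single n 1`. -/
abbrev R2 : Type := AddMonoidAlgebra ℤ (Fin 2 → ℤ)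

/-- The inclusion `ℤ[u₁, u₂] → R₂` of the polynomial ring into the Laurent polynomial ring. -/
noncomputable def polyToR2 : MvPolynomial (Fin 2) ℤ →+* R2 :=
  MvPolynomial.eval₂Hom (algebraMap ℤ R2) fun i => AddMonoidAlgebra.single (Pi.single i 1) 1

lemma polyToR2_monomial (e : Fin 2 →₀ ℕ) (c : ℤ) :
    polyToR2 (MvPolynomial.monomial e c) = AddMonoidAlgebra.single (fun i => (e i : ℤ)) c := by
  rw [polyToR2, MvPolynomial.coe_eval₂Hom, MvPolynomial.eval₂_monomial,
    Finsupp.prod_fintype _ _ (by simp)]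
  simp only [AddMonoidAlgebra.single_pow, one_pow, Fin.prod_univ_two,
    AddMonoidAlgebra.single_mul_single, mul_one, AddMonoidAlgebra.coe_algebraMap,
    Function.comp_apply, Algebra.algebraMap_self, RingHom.id_apply, zero_add]
  congr 1
  ext i
  fin_cases i <;> simp

lemma isUnit_polyToR2_monomial (e : Fin 2 →₀ ℕ) :
    IsUnit (polyToR2 (MvPolynomial.monomial e 1)) := by
  rw [polyToR2_monomial]
  refine IsUnit.of_mul_eq_one (AddMonoidAlgebra.single (-fun i => (e i : ℤ)) 1) ?_
  rw [AddMonoidAlgebra.single_mul_single, add_neg_cancel, mul_one]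
  rfl

/-- Every Laurent polynomial becomes a polynomial after multiplication by a monomial. -/
lemma exists_monomial_mul_eq (r : R2) : ∃ (e : Fin 2 →₀ ℕ) (s : MvPolynomial (Fin 2) ℤ),
    polyToR2 (MvPolynomial.monomial e 1) * r = polyToR2 s := by
  induction r using AddMonoidAlgebra.induction_linear with
  | zero => exact ⟨0, 0, by simp⟩
  | add f g hf hg =>
    obtain ⟨e, s, h⟩ := hf
    obtain ⟨e', s', h'⟩ := hg
    refine ⟨e + e', MvPolynomial.monomial e' 1 * s + MvPolynomial.monomial e 1 * s', ?_⟩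
    have : (MvPolynomial.monomial (e + e') (1 : ℤ)) =
        MvPolynomial.monomial e 1 * MvPolynomial.monomial e' 1 := by
      rw [MvPolynomial.monomial_mul, mul_one]
    rw [this, map_add, map_mul, map_mul, map_mul, ← h, ← h']
    ring
  | single n c =>
    refine ⟨Finsupp.equivFunOnFinite.symm fun i => (-n i).toNat,
      MvPolynomial.monomial (Finsupp.equivFunOnFinite.symm fun i => (n i).toNat) c, ?_⟩
    rw [polyToR2_monomial, polyToR2_monomial, AddMonoidAlgebra.single_mul_single, one_mul]
    congr 1
    ext i
    simp only [Finsupp.equivFunOnFinite_symm_apply_apply, Pi.add_apply]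
    omega

/-- An ideal of `R₂` is generated by its contraction to `ℤ[u₁, u₂]`, so the latter cannot be
principal when the former is not. -/
lemma comap_polyToR2_ne_span {q : Ideal R2} (hq : ¬q.IsPrincipal) (π : MvPolynomial (Fin 2) ℤ) :
    q.comap polyToR2 ≠ Ideal.span {π} := by
  intro h
  refine hq ⟨polyToR2 π, le_antisymm (fun r hr => ?_) ?_⟩
  · obtain ⟨e, s, hs⟩ := exists_monomial_mul_eq r
    have hsq : s ∈ q.comap polyToR2 := by
      rw [Ideal.mem_comap, ← hs]; exact q.mul_mem_left _ hr
    rw [h, Ideal.mem_span_singleton] at hsq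
    obtain ⟨t, rfl⟩ := hsq
    change r ∈ Ideal.span {polyToR2 π}
    rw [← Ideal.unit_mul_mem_iff_mem _ (isUnit_polyToR2_monomial e), hs, map_mul]
    exact Ideal.mul_mem_right _ _ (Ideal.mem_span_singleton_self _)
  · change Ideal.span {polyToR2 π} ≤ q
    rw [Ideal.span_singleton_le_iff_mem, ← Ideal.mem_comap, h]
    exact Ideal.mem_span_singleton_self _

/-- A prime of `ℚ[u₁, u₂]` whose contraction to `ℤ[u₁, u₂]` is not principal is maximal: a
non-maximal one would be the third term of a chain `0 < (π) < J < m`, whereas the Krull dimension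
is two. -/
lemma isMaximal_of_comap_not_principal (J : Ideal (MvPolynomial (Fin 2) ℚ)) [hJ : J.IsPrime]
    (h : ∀ π, J.comap (MvPolynomial.map (algebraMap ℤ ℚ)) ≠ Ideal.span {π}) :
    J.IsMaximal := by
  let _ : Algebra (MvPolynomial (Fin 2) ℤ) (MvPolynomial (Fin 2) ℚ) :=
    MvPolynomial.algebraMvPolynomial
  let S := (nonZeroDivisors ℤ).map (MvPolynomial.C (σ := Fin 2))
  have hloc : IsLocalization S (MvPolynomial (Fin 2) ℚ) := inferInstance
  set f : MvPolynomial (Fin 2) ℤ →+* MvPolynomial (Fin 2) ℚ :=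
    MvPolynomial.map (algebraMap ℤ ℚ) with hf
  have hfa : f = algebraMap _ _ := rfl
  have hq0 : J.comap f ≠ ⊥ := fun h0 => h 0 (by rw [h0]; simp)
  obtain ⟨π, hπ, hprime⟩ := Ideal.IsPrime.exists_mem_prime_of_ne_bot (hJ.comap f) hq0
  have hdJ : Disjoint (S : Set (MvPolynomial (Fin 2) ℤ)) (J.comap f : Set _) :=
    ((IsLocalization.isPrime_iff_isPrime_disjoint S _ J).1 hJ).2
  have hle : Ideal.span {π} ≤ J.comap f := (Ideal.span_singleton_le_iff_mem _).2 hπ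
  have hd : Disjoint (S : Set (MvPolynomial (Fin 2) ℤ)) (Ideal.span {π} : Set _) :=
    hdJ.mono_right hle
  have hpp : (Ideal.span {π}).IsPrime := (Ideal.span_singleton_prime hprime.ne_zero).2 hprime
  have hI := IsLocalization.isPrime_of_isPrime_disjoint S (MvPolynomial (Fin 2) ℚ) _ hpp hd
  have hcm := IsLocalization.under_map_of_isPrime_disjoint S (MvPolynomial (Fin 2) ℚ) hpp hd
  rw [Ideal.under_def, ← hfa] at hcm
  rw [← hfa] at hI
  by_contra hmax
  obtain ⟨m, hm, hJm⟩ := Ideal.exists_le_maximal J hJ.ne_top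
  have hlt : J < m := lt_of_le_of_ne hJm fun e => hmax (e ▸ hm)
  have hlt1 : (Ideal.span {π}).map f < J :=
    lt_of_le_of_ne (Ideal.map_le_iff_le_comap.2 hle) fun e => h π (by rw [← e]; exact hcm)
  have hlt0 : ⊥ < (Ideal.span {π}).map f := by
    rw [bot_lt_iff_ne_bot]
    intro e
    rw [e] at hcm
    have hinj : Function.Injective f := MvPolynomial.map_injective _ Int.cast_injective
    rw [Ideal.comap_bot_of_injective f hinj] at hcm
    exact hprime.ne_zero (Ideal.span_singleton_eq_bot.1 hcm.symm)
  have hdim : ringKrullDim (MvPolynomial (Fin 2) ℚ) = 2 := by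
    rw [MvPolynomial.ringKrullDim_of_isNoetherianRing, ringKrullDim_eq_zero_of_field]
    simp
  -- The chain `0 < (π) < J < m` has length three, more than the Krull dimension allows.
  let l : LTSeries (PrimeSpectrum (MvPolynomial (Fin 2) ℚ)) :=
    { length := 3
      toFun := ![⟨⊥, Ideal.isPrime_bot⟩, ⟨_, hI⟩, ⟨J, hJ⟩, ⟨m, hm.isPrime⟩]
      step := by
        intro i
        fin_cases i
        · exact hlt0
        · exact hlt1
        · exact hlt }
  have := Order.LTSeries.length_le_krullDim l
  change ((3 : ℕ) : WithBot ℕ∞) ≤ ringKrullDim _ at this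
  rw [hdim] at this
  exact absurd this (by decide)

lemma finiteDimensional_of_surjective {A B : Type} [AddCommGroup A] [AddCommGroup B]
    (g : A →+ B) (hg : Function.Surjective g) [FiniteDimensional ℚ (ℚ ⊗[ℤ] A)] :
    FiniteDimensional ℚ (ℚ ⊗[ℤ] B) :=
  Module.Finite.of_surjective (g.toIntLinearMap.baseChange ℚ)
    (LinearMap.lTensor_surjective ℚ hg)

lemma finiteDimensional_of_injective {A B : Type} [AddCommGroup A] [AddCommGroup B]
    (g : A →+ B) (hg : Function.Injective g) [FiniteDimensional ℚ (ℚ ⊗[ℤ] B)] :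
    FiniteDimensional ℚ (ℚ ⊗[ℤ] A) :=
  Module.Finite.of_injective (g.toIntLinearMap.baseChange ℚ)
    (Module.Flat.lTensor_preserves_injective_linearMap (M := ℚ) g.toIntLinearMap hg)

lemma finiteDimensional_of_exact {A B C : Type} [AddCommGroup A] [AddCommGroup B] [AddCommGroup C]
    (f : A →+ B) (g : B →+ C) (hg : Function.Surjective g) (hfg : Function.Exact f g)
    [FiniteDimensional ℚ (ℚ ⊗[ℤ] A)] [FiniteDimensional ℚ (ℚ ⊗[ℤ] C)] :
    FiniteDimensional ℚ (ℚ ⊗[ℤ] B) := by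
  have h : Function.Exact (f.toIntLinearMap.baseChange ℚ) (g.toIntLinearMap.baseChange ℚ) :=
    lTensor_exact ℚ (f := f.toIntLinearMap) (g := g.toIntLinearMap) hfg hg
  have : FiniteDimensional ℚ (LinearMap.ker (g.toIntLinearMap.baseChange ℚ)) := by
    rw [h.linearMap_ker_eq]; infer_instance
  have := Module.Finite.equiv
    ((g.toIntLinearMap.baseChange ℚ).quotKerEquivOfSurjective
      (LinearMap.lTensor_surjective ℚ hg)).symm
  exact Module.Finite.of_submodule_quotient (LinearMap.ker (g.toIntLinearMap.baseChange ℚ))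

lemma finiteDimensional_of_rat {V : Type} [AddCommGroup V] [Module ℚ V] [FiniteDimensional ℚ V] :
    FiniteDimensional ℚ (ℚ ⊗[ℤ] V) :=
  Module.Finite.equiv ((TensorProduct.lid ℚ V).symm.trans
    (IsLocalization.moduleTensorEquiv (nonZeroDivisors ℤ) ℚ ℚ V))

/-- If `q` contains a nonzero integer, the tensor product vanishes. Otherwise `u₁` and `u₂`
generate over `ℚ` a number field inside the fraction field of `R₂ / q`, and this number field
contains `R₂ / q`. -/
lemma finiteDimensional_quotient (q : Ideal R2) [hq : q.IsPrime] (hnp : ¬q.IsPrincipal) :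
    FiniteDimensional ℚ (ℚ ⊗[ℤ] (R2 ⧸ q)) := by
  by_cases hz : ∃ c : ℤ, c ≠ 0 ∧ algebraMap ℤ R2 c ∈ q
  · obtain ⟨c, hc, hcq⟩ := hz
    have hzero : ∀ x : R2 ⧸ q, c • x = 0 := by
      intro x
      obtain ⟨r, rfl⟩ := Ideal.Quotient.mk_surjective x
      rw [← map_zsmul, Ideal.Quotient.eq_zero_iff_mem, Algebra.smul_def]
      exact q.mul_mem_right _ hcq
    have : Subsingleton (ℚ ⊗[ℤ] (R2 ⧸ q)) := by
      refine subsingleton_of_forall_eq 0 fun z => ?_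
      induction z with
      | zero => rfl
      | add x y hx hy => rw [hx, hy, add_zero]
      | tmul a x =>
        have : a = c • (a / c) := by
          rw [zsmul_eq_mul, mul_div_cancel₀]
          exact_mod_cast hc
        rw [this, TensorProduct.smul_tmul, hzero, TensorProduct.tmul_zero]
    infer_instance
  · push Not at hz
    let L := FractionRing (R2 ⧸ q)
    let g : R2 →+* L := (algebraMap (R2 ⧸ q) L).comp (Ideal.Quotient.mk q)
    have hg : ∀ r, g r = 0 ↔ r ∈ q := fun r => by
      rw [← Ideal.Quotient.eq_zero_iff_mem]
      exact map_eq_zero_iff (algebraMap (R2 ⧸ q) L) (IsFractionRing.injective _ _)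
    have : CharZero L := by
      refine charZero_of_inj_zero fun n hn => ?_
      by_contra h0
      refine hz n (by exact_mod_cast h0) ((hg _).1 ?_)
      simpa using hn
    -- The classes of `u₁` and `u₂` generate `ψ.range` over `ℚ`.
    let ψ : MvPolynomial (Fin 2) ℚ →ₐ[ℚ] L :=
      MvPolynomial.aeval fun i => g (AddMonoidAlgebra.single (Pi.single i 1) 1)
    have hψ : ∀ s, ψ (MvPolynomial.map (algebraMap ℤ ℚ) s) = g (polyToR2 s) := by
      have : (ψ : MvPolynomial (Fin 2) ℚ →+* L).comp (MvPolynomial.map (algebraMap ℤ ℚ)) =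
          g.comp polyToR2 := by
        ext i
        · simp
        · simp [ψ, polyToR2]
      exact fun s => DFunLike.congr_fun this s
    have hJ : (RingHom.ker ψ).IsPrime := RingHom.ker_isPrime ψ
    have hcomap : (RingHom.ker ψ).comap (MvPolynomial.map (algebraMap ℤ ℚ)) =
        q.comap polyToR2 := by
      ext s
      rw [Ideal.mem_comap, RingHom.mem_ker, hψ, hg, Ideal.mem_comap]
    have hmax := isMaximal_of_comap_not_principal (RingHom.ker ψ) fun π => by
      rw [hcomap]; exact comap_polyToR2_ne_span hnp π
    have hfin : FiniteDimensional ℚ ψ.range := by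
      let _ := Ideal.Quotient.field (RingHom.ker ψ)
      have := finite_of_finite_type_of_isJacobsonRing ℚ (MvPolynomial (Fin 2) ℚ ⧸ RingHom.ker ψ)
      exact Module.Finite.equiv (Ideal.quotientKerEquivRange ψ).toLinearEquiv
    have hmem : ∀ x, algebraMap (R2 ⧸ q) L x ∈ ψ.range := by
      intro x
      obtain ⟨r, rfl⟩ := Ideal.Quotient.mk_surjective x
      change g r ∈ ψ.range
      obtain ⟨e, s, hs⟩ := exists_monomial_mul_eq r
      have hu : g (polyToR2 (MvPolynomial.monomial e 1)) ≠ 0 :=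
        ((isUnit_polyToR2_monomial e).map g).ne_zero
      have hmem' : ∀ t, g (polyToR2 t) ∈ ψ.range := fun t => ⟨_, hψ t⟩
      have halg : IsAlgebraic ℚ (g (polyToR2 (MvPolynomial.monomial e 1))) :=
        (Algebra.IsAlgebraic.isAlgebraic (R := ℚ)
          (⟨_, hmem' (MvPolynomial.monomial e 1)⟩ : ψ.range)).algebraMap (A := L)
      -- `ψ.range` is algebraic over `ℚ`, so it contains the inverses of the monomials.
      have hinv := ψ.range.inv_mem_of_algebraic (x := ⟨_, hmem' (MvPolynomial.monomial e 1)⟩) halg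
      have : g r = (g (polyToR2 (MvPolynomial.monomial e 1)))⁻¹ * g (polyToR2 s) := by
        rw [← hs, map_mul, inv_mul_cancel_left₀ hu]
      rw [this]
      exact mul_mem hinv (hmem' s)
    have := finiteDimensional_of_rat (V := ψ.range)
    exact finiteDimensional_of_injective
      ((algebraMap (R2 ⧸ q) L).codRestrict ψ.range hmem : (R2 ⧸ q) →+* ψ.range).toAddMonoidHom
      fun x y h => IsFractionRing.injective (R2 ⧸ q) L (congrArg Subtype.val h)

lemma isNoetherianRing_R2 : IsNoetherianRing R2 :=
  have : Algebra.FiniteType ℤ R2 := inferInstance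
  Algebra.FiniteType.isNoetherianRing ℤ R2

/-- Dévissage: only primes in the support matter, and the support, unlike the set of associated
primes, is controlled along a filtration with cyclic prime quotients. -/
lemma finiteDimensional_of_support (M : Type) [AddCommGroup M] [Module R2 M] [Module.Finite R2 M]
    (h : ∀ p ∈ Module.support R2 M, ∃ q : Ideal R2, q.IsPrime ∧ ¬q.IsPrincipal ∧ q ≤ p.asIdeal) :
    FiniteDimensional ℚ (ℚ ⊗[ℤ] M) := by
  have := isNoetherianRing_R2
  revert h
  induction ‹Module.Finite R2 M› using
    IsNoetherianRing.induction_on_isQuotientEquivQuotientPrime R2 with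
  | subsingleton N => intro _; infer_instance
  | quotient N p e =>
    intro h
    obtain ⟨q, hq, hnp, hle⟩ := h p (by
      rw [e.support_eq, Module.support_eq_zeroLocus, Ideal.annihilator_quotient]
      exact fun _ hx => hx)
    have := finiteDimensional_quotient q hnp
    exact finiteDimensional_of_surjective
      (e.symm.toLinearMap.toAddMonoidHom.comp (Ideal.Quotient.factor hle).toAddMonoidHom)
      (e.symm.surjective.comp (Ideal.Quotient.factor_surjective hle))
  | exact N₁ N₂ N₃ f g hf hg hfg h₁ h₃ =>
    intro h
    rw [Module.support_of_exact hfg hf hg] at h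
    have := h₁ fun p hp => h p (Or.inl hp)
    have := h₃ fun p hp => h p (Or.inr hp)
    exact finiteDimensional_of_exact f.toAddMonoidHom g.toAddMonoidHom hg hfg

/-- Let `M` be a Noetherian `R₂`-module such that every associated prime
`p` of `M` is non-principal and contains no nonzero element of the form `u^n − 1`
(the algebraic characterizations of the dual action being mixing with zero entropy).
Then `ℚ ⊗_ℤ M` is a finite-dimensional `ℚ`-vector space (equivalently, `M` modulo its
torsion subgroup embeds in `ℚⁿ` for some `n`). -/
theorem stmt1 (M : Type) [AddCommGroup M] [Module R2 M] [IsNoetherian R2 M]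
    (hassoc : ∀ p ∈ associatedPrimes R2 M,
      ¬p.IsPrincipal ∧
        ∀ n : Fin 2 → ℤ, AddMonoidAlgebra.single n 1 - 1 ∈ p → n = 0) :
    FiniteDimensional ℚ (ℚ ⊗[ℤ] M) := by
  have := isNoetherianRing_R2
  refine finiteDimensional_of_support M fun p hp => ?_
  rw [Module.support_eq_zeroLocus] at hp
  -- Each prime of the support contains a minimal one, and minimal ones are associated with `M`.
  obtain ⟨q, hq, hle⟩ := Ideal.exists_minimalPrimes_le hp
  exact ⟨q, hq.1.1, (hassoc q
    (Module.associatedPrimes.minimalPrimes_annihilator_subset_associatedPrimes R2 M hq)).1, hle⟩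
end

section
/- Let d ≥ 1 and let p ⊂ R_d = ℤ[u₁^{±1},…,u_d^{±1}] be a prime ideal. Then the integral domain R = R_d/p admits a discrete valuation if and only if R is not finitely generated as an additive (abelian) group. Here a valuation on R is a function v : R → ℝ ∪ {∞} with v(1) = 0, v(x) = ∞ exactly when x = 0, v(xy) = v(x) + v(y), and v(x+y) ≥ min{v(x), v(y)}; v is discrete if the set {v(u^n mod p) : n ∈ ℤ^d} is a nontrivial discrete subgroup of ℝ. -/
/-- A valuation on a ring `R`, with values in `ℝ ∪ {∞}` (encoded as `WithTop ℝ`):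
`v 1 = 0`, `v x = ∞` exactly when `x = 0`, `v (x*y) = v x + v y`, and
`v (x+y) ≥ min (v x) (v y)`. -/
def IsValuation {R : Type} [CommRing R] (v : R → WithTop ℝ) : Prop :=
  v 1 = 0 ∧ (∀ x, v x = ⊤ ↔ x = 0) ∧ (∀ x y, v (x * y) = v x + v y) ∧
    ∀ x y, min (v x) (v y) ≤ v (x + y)

section

open scoped WithZero nonZeroDivisors Pointwise

/-! ### Discreteness of valuations over one-dimensional Noetherian domains -/

section
variable {A K Γ : Type*} [CommRing A] [Field K] [Algebra A K]
  [LinearOrderedCommGroupWithZero Γ]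

/-- The ideal of all elements of `A` of value at most `γ`, where `v` is a (multiplicatively written)
valuation with `v ≤ 1` on `A`. -/
def valIdeal (v : Valuation K Γ) (hv : ∀ a : A, v (algebraMap A K a) ≤ 1) (γ : Γ) : Ideal A where
  carrier := {a | v (algebraMap A K a) ≤ γ}
  zero_mem' := by simp
  add_mem' := fun {a b} ha hb => by
    simp only [Set.mem_ofPred_eq, map_add] at *
    exact v.map_add_le ha hb
  smul_mem' := fun c a ha => by
    simp only [Set.mem_ofPred_eq, smul_eq_mul, map_mul] at *
    exact (mul_le_of_le_one_left' (hv c)).trans ha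

lemma mem_valIdeal {v : Valuation K Γ} {hv : ∀ a : A, v (algebraMap A K a) ≤ 1} {γ : Γ} {a : A} :
    a ∈ valIdeal v hv γ ↔ v (algebraMap A K a) ≤ γ := Iff.rfl

variable [IsDomain A]

/-- Length formula for ideals: `A / aI` has length `length (A / I) + length (A / aA)`; the length of
`A / I` appears as the coheight of `I` in the lattice of ideals. -/
lemma coheight_smul_ideal {a : A} (ha : a ≠ 0) (I : Ideal A) :
    Order.coheight (a • I) = Order.coheight I + Ring.ord A a := by
  have := Module.length_eq_add_of_exact (Ideal.mulQuot a I) (Ideal.quotOfMul a I)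
    (Ideal.mulQuot_injective I (mem_nonZeroDivisors_of_ne_zero ha))
    (Ideal.quotOfMul_surjective I) (Ideal.exact_mulQuot_quotOfMul I)
  simpa only [Module.length_quotient, Ring.ord] using this

variable [IsNoetherianRing A] [Ring.KrullDimLE 1 A]

lemma coheight_ne_top_of_mem {I : Ideal A} {a : A} (ha : a ≠ 0) (h : a ∈ I) :
    Order.coheight I ≠ ⊤ := by
  have h1 := Ring.ord_ne_top (mem_nonZeroDivisors_of_ne_zero ha)
  rw [Ring.ord, Module.length_quotient] at h1
  exact ne_top_of_le_ne_top h1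
    (Order.coheight_anti ((Ideal.span_singleton_le_iff_mem I).2 h))

/-- The finiteness at the heart of the Krull-Akizuki theorem: over a Noetherian domain `A` of
dimension at most one, at most `length (A / aA) + 1` values of `v` lie between `v a` and `1`. -/
lemma finite_Icc [IsFractionRing A K] (v : Valuation K Γ)
    (hv : ∀ a : A, v (algebraMap A K a) ≤ 1) (hs : Function.Surjective v) (a : A) (ha : a ≠ 0) :
    (Set.Icc (v (algebraMap A K a)) 1).Finite := by
  classical
  obtain ⟨n, hn⟩ := ENat.ne_top_iff_exists.1 (Ring.ord_ne_top (mem_nonZeroDivisors_of_ne_zero ha))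
  by_contra hinf
  obtain ⟨s, hsub, hcard⟩ := Set.Infinite.exists_subset_card_eq hinf (n + 2)
  choose f hf using hs
  -- A common denominator `b` moves chosen elements of values `γ ∈ s` into `A`. The ideals
  -- `valIdeal v hv (β * γ)`, with `β = v b`, then form a strict chain between
  -- `I = valIdeal v hv β` and `a • I`, two ideals whose coheights differ by `n`.
  obtain ⟨b, hb⟩ := IsLocalization.exist_integer_multiples_of_finset A⁰ (s.image f)
  have hb0 : (b : A) ≠ 0 := nonZeroDivisors.coe_ne_zero b
  set β := v (algebraMap A K b)
  have hβ : 0 < β := by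
    simp [β, Valuation.pos_iff]
  have hr : ∀ γ ∈ s, ∃ r : A, v (algebraMap A K r) = β * γ := by
    intro γ hγ
    obtain ⟨r, hr⟩ := hb (f γ) (Finset.mem_image_of_mem f hγ)
    refine ⟨r, ?_⟩
    rw [hr, Algebra.smul_def, map_mul, hf]
  have hfin : ∀ γ ∈ s, Order.coheight (valIdeal v hv (β * γ)) ≠ ⊤ := by
    intro γ hγ
    refine coheight_ne_top_of_mem (mul_ne_zero hb0 ha) ?_
    rw [mem_valIdeal, map_mul, map_mul]
    exact mul_le_mul_right (hsub hγ).1 _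
  have hfin0 : Order.coheight (valIdeal v hv β) ≠ ⊤ :=
    coheight_ne_top_of_mem hb0 (mem_valIdeal.2 le_rfl)
  obtain ⟨m, hm⟩ := ENat.ne_top_iff_exists.1 hfin0
  have hlt : ∀ γ ∈ s, ∀ γ' ∈ s, γ < γ' →
      Order.coheight (valIdeal v hv (β * γ')) < Order.coheight (valIdeal v hv (β * γ)) := by
    intro γ hγ γ' hγ' h
    have hlt' : β * γ < β * γ' := (mul_lt_mul_iff_right₀ hβ).2 h
    refine Order.coheight_strictAnti ?_ (hfin γ' hγ').lt_top
    refine lt_of_le_of_ne (fun x hx => (mem_valIdeal.1 hx).trans hlt'.le) fun he => ?_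
    obtain ⟨r, hr⟩ := hr γ' hγ'
    have : r ∈ valIdeal v hv (β * γ) := he ▸ mem_valIdeal.2 hr.le
    rw [mem_valIdeal, hr] at this
    exact this.not_gt hlt'
  have hmap : ∀ γ ∈ s, (Order.coheight (valIdeal v hv (β * γ))).toNat ∈ Finset.Icc m (m + n) := by
    intro γ hγ
    have h1 : Order.coheight (valIdeal v hv β) ≤ Order.coheight (valIdeal v hv (β * γ)) :=
      Order.coheight_anti fun x hx => (mem_valIdeal.1 hx).trans
        (mul_le_of_le_one_right' (hsub hγ).2)
    have h2 : Order.coheight (valIdeal v hv (β * γ)) ≤ Order.coheight (a • valIdeal v hv β) := by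
      refine Order.coheight_anti fun x hx => ?_
      obtain ⟨y, hy, rfl⟩ := Submodule.mem_smul_pointwise_iff_exists _ _ _ |>.1 hx
      rw [mem_valIdeal, smul_eq_mul, map_mul, map_mul, mul_comm]
      exact mul_le_mul' (mem_valIdeal.1 hy) (hsub hγ).1
    rw [coheight_smul_ideal ha, ← hm, ← hn] at h2
    rw [← hm] at h1
    obtain ⟨k, hk⟩ := ENat.ne_top_iff_exists.1 (hfin γ hγ)
    rw [← hk] at h1 h2 ⊢
    rw [Finset.mem_Icc]
    exact_mod_cast And.intro h1 h2
  have hle := Finset.card_le_card_of_injOn _ hmap (fun γ hγ γ' hγ' he => by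
    have he' := congrArg (Nat.cast : ℕ → ℕ∞) he
    simp only [ENat.natCast_toNat (hfin γ hγ), ENat.natCast_toNat (hfin γ' hγ')] at he'
    rcases lt_trichotomy γ γ' with h | h | h
    · exact absurd he' (hlt γ hγ γ' hγ' h).ne'
    · exact h
    · exact absurd he' (hlt γ' hγ' γ hγ h).ne)
  rw [hcard, Nat.card_Icc] at hle
  omega

/-- A nontrivial valuation of `K`, at most `1` on a Noetherian domain of dimension at most one
with fraction field `K`, has value group `ℤ`: finiteness of the intervals `[γ, 1]` makes the value group
Archimedean and prevents it from being densely ordered. -/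
lemma equivInt [IsFractionRing A K] (v : Valuation K Γ)
    (hv : ∀ a : A, v (algebraMap A K a) ≤ 1) (hs : Function.Surjective v)
    (hnt : ∃ x, v x ≠ 0 ∧ v x ≠ 1) : Nonempty (Γ ≃*o ℤᵐ⁰) := by
  have hfin : ∀ γ : Γ, γ ≠ 0 → (Set.Icc γ 1).Finite := by
    intro γ hγ
    obtain ⟨x, rfl⟩ := hs γ
    obtain ⟨a, b, -, rfl⟩ := IsFractionRing.div_surjective (A := A) x
    have ha : a ≠ 0 := by rintro rfl; simp at hγ
    refine (finite_Icc v hv hs a ha).subset (Set.Icc_subset_Icc_left ?_)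
    have hb : 0 < v (algebraMap A K b) := by
      rw [Valuation.pos_iff]; intro h; simp [h] at hγ
    rw [map_div₀, le_div_iff₀ hb]
    exact mul_le_of_le_one_right' (hv b)
  have : Nontrivial Γˣ := by
    obtain ⟨x, h0, h1⟩ := hnt
    exact ⟨Units.mk0 _ h0, 1, fun h => h1 (by simpa using congrArg Units.val h)⟩
  have : MulArchimedean Γ := by
    refine ⟨fun x z hz => ?_⟩
    by_contra! hlt
    have hz0 : 0 < z := zero_lt_one.trans hz
    have hx0 : 0 < x := lt_of_le_of_lt zero_le (hlt 0)
    have hanti : StrictAnti fun n : ℕ => z⁻¹ ^ n :=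
      pow_right_strictAnti₀ (inv_pos.2 hz0) (inv_lt_one_of_one_lt₀ hz)
    -- otherwise the powers of `z⁻¹` are infinitely many points of `[x⁻¹, 1]`
    refine Set.infinite_of_injective_forall_mem hanti.injective (s := Set.Icc x⁻¹ 1) (fun n => ?_)
      (hfin _ (inv_ne_zero hx0.ne'))
    refine ⟨?_, pow_le_one' (inv_le_one_of_one_le₀ hz.le) n⟩
    rw [inv_pow]
    exact inv_anti₀ (pow_pos hz0 n) (hlt n).le
  refine (LinearOrderedCommGroupWithZero.discrete_or_denselyOrdered Γ).resolve_right fun hd => ?_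
  obtain ⟨x, h0, h1⟩ := hnt
  obtain ⟨g, hg0, hg1⟩ := exists_between (zero_lt_one' Γ)
  exact (Set.Icc_infinite hg1) (hfin g hg0.ne')

end

/-! ### Discrete valuations detecting non-integral elements -/

/-- In a finitely generated field, an element that is not integral over `ℤ` has a pole at some
discrete valuation. -/
lemma exists_discrete_of_not_isIntegral {K : Type*} [Field K] {F : Set K} (hF : F.Finite)
    (hgen : Subfield.closure F = ⊤) {x : K} (hx : ¬ IsIntegral ℤ x) :
    ∃ v : Valuation K ℤᵐ⁰, 1 < v x := by
  obtain ⟨V₀, -, hxV⟩ := Subring.exists_le_valuationSubring_of_isIntegrallyClosedIn (x := x)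
    (R := (integralClosure ℤ K).toSubring) hx
  have hx0 : x ≠ 0 := by rintro rfl; exact hxV V₀.zero_mem
  have hyV : x⁻¹ ∈ V₀ := (V₀.mem_or_inv_mem x).resolve_left hxV
  -- `B = ℤ[T]` is a Noetherian ring with fraction field `K` inside `V₀`, so that `x⁻¹ ∈ B` is not
  -- a unit of `B`.
  set T : Set K := insert x⁻¹ ((F ∪ F⁻¹) ∩ V₀)
  have hTfin : T.Finite := ((hF.union hF.inv).inter_of_left _).insert _
  set B := Subring.closure T
  have hBV : B ≤ V₀.toSubring := by
    refine (Subring.closure_le).2 ?_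
    rintro z (rfl | hz)
    · exact hyV
    · exact hz.2
  have hTgen : Subfield.closure T = ⊤ := by
    rw [eq_top_iff, ← hgen, Subfield.closure_le]
    intro f hf
    rcases V₀.mem_or_inv_mem f with h | h
    · exact Subfield.subset_closure (Or.inr ⟨Or.inl hf, h⟩)
    · rw [← inv_inv f]
      exact inv_mem (Subfield.subset_closure (Or.inr ⟨Or.inr (by simpa using hf), h⟩))
  have hfrac : ∀ z : K, ∃ a ∈ B, ∃ b ∈ B, a / b = z := fun z =>
    Subfield.mem_closure_iff.1 (hTgen ▸ Subfield.mem_top z)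
  have : IsNoetherianRing B := is_noetherian_subring_closure T hTfin
  let y : B := ⟨x⁻¹, Subring.subset_closure (Or.inl rfl)⟩
  have hy : ¬ IsUnit y := by
    intro h
    obtain ⟨z, hz⟩ := isUnit_iff_exists_inv.1 h
    have hz' : x⁻¹ * (z : K) = 1 := congrArg Subtype.val hz
    rw [inv_mul_eq_one₀ hx0] at hz'
    exact hxV (hz' ▸ hBV z.2)
  obtain ⟨P, hP⟩ := Ideal.nonempty_minimalPrimes (I := Ideal.span {y})
    (by rwa [Ne, Ideal.span_singleton_eq_top])
  have hPp : P.IsPrime := hP.1.1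
  have hyP : y ∈ P := hP.1.2 (Ideal.mem_span_singleton_self y)
  -- By Krull's principal ideal theorem the localization `L = B_P` has dimension at most one.
  let L := LocalSubring.ofPrime B P
  have hBL : B ≤ L.toSubring := LocalSubring.le_ofPrime B P
  have : IsNoetherianRing L.toSubring := IsLocalization.isNoetherianRing P.primeCompl _ ‹_›
  have : Ring.KrullDimLE 1 L.toSubring := by
    rw [Ring.krullDimLE_iff, IsLocalization.AtPrime.ringKrullDim_eq_height P]
    exact_mod_cast Ideal.height_le_one_of_isPrincipal_of_mem_minimalPrimes _ P hP
  have : IsFractionRing L.toSubring K := by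
    refine IsFractionRing.of_field _ _ fun z => ?_
    obtain ⟨a, ha, b, hb, rfl⟩ := hfrac z
    exact ⟨⟨a, hBL ha⟩, ⟨b, hBL hb⟩, rfl⟩
  obtain ⟨V, hLV, hloc⟩ := L.exists_le_valuationSubring
  have hyL : ¬ IsUnit (algebraMap B L.toSubring y) := by
    rw [IsLocalization.AtPrime.isUnit_to_map_iff L.toSubring P]
    exact fun h => h hyP
  have hlt : V.valuation x⁻¹ < 1 := by
    have h := V.valuation_lt_one_iff (Subring.inclusion hLV (algebraMap B L.toSubring y))
    refine h.1 ((IsLocalRing.mem_maximalIdeal _).2 fun hu => hyL (hloc.1 _ hu))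
  have hle : ∀ a : L.toSubring, V.valuation (algebraMap L.toSubring K a) ≤ 1 :=
    fun a => V.valuation_le_one ⟨a, hLV a.2⟩
  obtain ⟨e⟩ := equivInt V.valuation hle V.valuation_surjective
    ⟨x⁻¹, by simpa using hx0, hlt.ne⟩
  refine ⟨V.valuation.map (e : V.ValueGroup ≃* ℤᵐ⁰).toMonoidWithZeroHom e.toOrderIso.monotone, ?_⟩
  have h1 : 1 < V.valuation x := by
    rw [map_inv₀] at hlt
    exact (inv_lt_one₀ ((Valuation.pos_iff _).2 hx0)).1 hlt
  have h2 := e.toOrderIso.strictMono h1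
  have h3 : e 1 = 1 := map_one e
  exact h3 ▸ h2

/-! ### Additive valuations with values in `ℝ ∪ {∞}` -/

/-- The additive form `x ↦ -log (v x)` of the restriction to `R` of a valuation `v` of `K` with
values in `ℤᵐ⁰`, with value `∞` at `0`. -/
noncomputable def addVal {R K : Type} [CommRing R] [Field K] [Algebra R K]
    (v : Valuation K ℤᵐ⁰) (x : R) : WithTop ℝ :=
  open Classical in
  if x = 0 then ⊤ else ((-(WithZero.log (v (algebraMap R K x)) : ℤ) : ℝ) : WithTop ℝ)

lemma addVal_of_ne {R K : Type} [CommRing R] [Field K] [Algebra R K]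
    (v : Valuation K ℤᵐ⁰) {x : R} (hx : x ≠ 0) :
    addVal v x = ((-(WithZero.log (v (algebraMap R K x)) : ℤ) : ℝ) : WithTop ℝ) := if_neg hx

lemma isValuation_addVal {R K : Type} [CommRing R] [IsDomain R] [Field K] [Algebra R K]
    [FaithfulSMul R K] (v : Valuation K ℤᵐ⁰) : IsValuation (addVal v : R → WithTop ℝ) := by
  have h0 : ∀ {x : R}, x ≠ 0 → v (algebraMap R K x) ≠ 0 := fun hx => by simpa using hx
  have htop : addVal v (0 : R) = ⊤ := if_pos rfl
  refine ⟨?_, fun x => ⟨fun h => ?_, fun h => h ▸ htop⟩, fun x y => ?_, fun x y => ?_⟩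
  · rw [addVal_of_ne v one_ne_zero]; simp
  · by_contra hx
    rw [addVal_of_ne v hx] at h
    exact WithTop.coe_ne_top h
  · by_cases hx : x = 0
    · simp [hx, htop]
    by_cases hy : y = 0
    · simp [hy, htop]
    rw [addVal_of_ne v hx, addVal_of_ne v hy, addVal_of_ne v (mul_ne_zero hx hy), map_mul, map_mul,
      WithZero.log_mul (h0 hx) (h0 hy), ← WithTop.coe_add]
    rw [WithTop.coe_inj]
    push_cast
    ring
  · by_cases hx : x = 0
    · simp [hx]
    by_cases hy : y = 0
    · simp [hy]
    by_cases hxy : x + y = 0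
    · simp [hxy, htop]
    rw [addVal_of_ne v hx, addVal_of_ne v hy, addVal_of_ne v hxy, min_le_iff, WithTop.coe_le_coe,
      WithTop.coe_le_coe, neg_le_neg_iff, neg_le_neg_iff, Int.cast_le, Int.cast_le,
      WithZero.log_le_log (h0 hxy) (h0 hx), WithZero.log_le_log (h0 hxy) (h0 hy), map_add]
    exact le_max_iff.1 (v.map_add _ _)

/-- If `R` is finitely generated as an additive group, a valuation is bounded below on `R` by its
minimum on a finite generating set. Hence it is nonnegative, as seen on powers, at each unit `x`
and at its inverse, and vanishes at `x`. -/
lemma IsValuation.eq_zero_of_fg {R : Type} [CommRing R] {v : R → WithTop ℝ}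
    (hv : IsValuation v) (hfg : AddGroup.FG R) {x y : R} (hxy : x * y = 1) : v x = 0 := by
  classical
  obtain ⟨h1, htop, hmul, hadd⟩ := hv
  have hneg1 : v (-1) = 0 := by
    have h := hmul (-1) (-1)
    rw [neg_mul_neg, one_mul, h1] at h
    cases hc : v (-1) with
    | top => simp [hc] at h
    | coe r =>
      rw [hc] at h
      norm_cast at h ⊢
      linarith
  obtain ⟨S, hS⟩ := hfg.1
  obtain ⟨m, hm⟩ : ∃ m : ℝ, ∀ s ∈ S, (m : WithTop ℝ) ≤ v s := by
    clear hS
    induction S using Finset.induction_on with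
    | empty => exact ⟨0, by simp⟩
    | insert a S ha ih =>
      obtain ⟨m, hm⟩ := ih
      obtain ⟨r, hr⟩ : ∃ r : ℝ, (r : WithTop ℝ) ≤ v a := by
        cases h : v a with
        | top => exact ⟨0, le_top⟩
        | coe r => exact ⟨r, le_rfl⟩
      refine ⟨min m r, fun s hs => ?_⟩
      rw [WithTop.coe_min]
      rcases Finset.mem_insert.1 hs with rfl | hs
      · exact (min_le_right _ _).trans hr
      · exact (min_le_left _ _).trans (hm s hs)
  have hall : ∀ z, (m : WithTop ℝ) ≤ v z := by
    intro z
    have hz : z ∈ AddSubgroup.closure (S : Set R) := hS ▸ AddSubgroup.mem_top z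
    induction hz using AddSubgroup.closure_induction with
    | mem z hz => exact hm z hz
    | zero => rw [(htop 0).2 rfl]; exact le_top
    | add a b _ _ ha hb => exact (le_min ha hb).trans (hadd a b)
    | neg a _ ha => rwa [← neg_one_mul, hmul, hneg1, zero_add]
  have hnonneg : ∀ a b : R, a * b = 1 → 0 ≤ v a := by
    intro a b hab
    cases ha : v a with
    | top => exact le_top
    | coe r =>
      have hpow : ∀ k : ℕ, v (a ^ k) = ((k * r : ℝ) : WithTop ℝ) := by
        intro k
        induction k with
        | zero => simp [h1]
        | succ k ih =>
          rw [pow_succ, hmul, ih, ha, ← WithTop.coe_add]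
          rw [WithTop.coe_inj]
          push_cast
          ring
      by_contra! hr
      have hr' : r < 0 := by exact_mod_cast hr
      obtain ⟨k, hk⟩ := exists_nat_gt (m / r)
      have h := hall (a ^ k)
      rw [hpow, WithTop.coe_le_coe] at h
      rw [div_lt_iff_of_neg hr'] at hk
      linarith
  have hx := hnonneg x y hxy
  have hy := hnonneg y x (by rwa [mul_comm])
  have hs := hmul x y
  rw [hxy, h1] at hs
  refine le_antisymm ?_ hx
  rw [hs]
  exact le_add_of_nonneg_right hy

end

/-! ### The characterization of rings with a discrete valuation -/

/-- For `d ≥ 1` and a prime ideal `p ⊂ R_d`, the integral domain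
`R = R_d/p` admits a discrete valuation if and only if `R` is not finitely generated as
an additive group.  Here a valuation `v` is discrete if the set
`{v(u^n mod p) : n ∈ ℤ^d}` is a nontrivial discrete subgroup of `ℝ`, i.e. it contains a
nonzero element and its nonzero elements are bounded away from `0`. -/
theorem stmt5 (d : ℕ) (hd : 1 ≤ d) (p : Ideal (Rd d)) (hp : p.IsPrime) :
    (∃ v : Rd d ⧸ p → WithTop ℝ, IsValuation v ∧
      (∃ n : Fin d → ℤ,
        v (Ideal.Quotient.mk p (AddMonoidAlgebra.single n 1)) ≠ ((0 : ℝ) : WithTop ℝ)) ∧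
      (∃ ε : ℝ, 0 < ε ∧ ∀ (n : Fin d → ℤ) (r : ℝ),
        v (Ideal.Quotient.mk p (AddMonoidAlgebra.single n 1)) = (r : WithTop ℝ) →
          r ≠ 0 → ε ≤ |r|)) ↔
      ¬AddGroup.FG (Rd d ⧸ p) := by
  let mon : (Fin d → ℤ) → Rd d ⧸ p := fun n =>
    Ideal.Quotient.mk p (AddMonoidAlgebra.single n 1)
  have hmon : ∀ n, mon n * mon (-n) = 1 := fun n => by
    simp only [mon, ← map_mul, AddMonoidAlgebra.single_mul_single, add_neg_cancel, mul_one]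
    rfl
  constructor
  · rintro ⟨v, hv, ⟨n, hn⟩, -⟩ hfg
    exact hn (hv.eq_zero_of_fg hfg (hmon n))
  · intro hfg
    -- The fraction field is kept abstract: `FractionRing` carries its own `ℤ`-algebra structure,
    -- which does not match syntactically the canonical one coming from the ring structure.
    obtain ⟨K, _, _, _⟩ : ∃ (K : Type) (_ : Field K) (_ : Algebra (Rd d ⧸ p) K),
        IsFractionRing (Rd d ⧸ p) K := ⟨FractionRing (Rd d ⧸ p), _, _, inferInstance⟩
    have hft : Algebra.FiniteType ℤ (Rd d ⧸ p) := inferInstance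
    obtain ⟨n, hn⟩ : ∃ n, ¬ IsIntegral ℤ (mon n) := by
      by_contra! hall
      refine hfg (Module.Finite.iff_addGroup_fg.1 ?_)
      -- the monomials span `R`, so `R` would be integral and of finite type over `ℤ`
      have : Algebra.IsIntegral ℤ (Rd d ⧸ p) := by
        refine ⟨fun z => ?_⟩
        obtain ⟨f, rfl⟩ := Ideal.Quotient.mk_surjective z
        induction f using AddMonoidAlgebra.induction_linear with
        | zero => simpa using isIntegral_zero
        | add f g hf hg => simpa using hf.add hg
        | single n r =>
          have : AddMonoidAlgebra.single n r = r • (AddMonoidAlgebra.single n 1 : Rd d) := by simp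
          rw [this, map_zsmul]
          exact (hall n).smul r
      exact Algebra.IsIntegral.finite
    obtain ⟨S, hS⟩ := hft.out
    have hgen : Subfield.closure (algebraMap (Rd d ⧸ p) K '' S) = ⊤ := by
      have hsub : ∀ a : Rd d ⧸ p, algebraMap _ K a ∈ Subfield.closure
          (algebraMap (Rd d ⧸ p) K '' S) := by
        intro a
        have ha : a ∈ Algebra.adjoin ℤ (S : Set (Rd d ⧸ p)) := hS ▸ Algebra.mem_top
        induction ha using Algebra.adjoin_induction with
        | mem a ha => exact Subfield.subset_closure ⟨a, ha, rfl⟩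
        | algebraMap r => simp
        | add a b _ _ ha hb => rw [map_add]; exact add_mem ha hb
        | mul a b _ _ ha hb => rw [map_mul]; exact mul_mem ha hb
      refine eq_top_iff.2 fun z _ => ?_
      obtain ⟨a, b, -, rfl⟩ := IsFractionRing.div_surjective (A := Rd d ⧸ p) z
      exact div_mem (hsub a) (hsub b)
    have hnK : ¬ IsIntegral ℤ (algebraMap (Rd d ⧸ p) K (mon n)) := by
      exact fun h => hn ((isIntegral_algHom_iff (algebraMap (Rd d ⧸ p) K).toIntAlgHom
        (IsFractionRing.injective _ K)).1 h)
    obtain ⟨v, hv⟩ := exists_discrete_of_not_isIntegral (S.finite_toSet.image _) hgen hnK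
    have hne : ∀ n, mon n ≠ 0 := fun n h => by simpa [h] using hmon n
    refine ⟨addVal v, isValuation_addVal v, ⟨n, ?_⟩, 1, one_pos, fun n r hr hr0 => ?_⟩
    · change addVal v (mon n) ≠ _
      rw [addVal_of_ne v (hne n), Ne, WithTop.coe_inj, neg_eq_zero, Int.cast_eq_zero]
      have h := (WithZero.log_lt_log one_ne_zero (zero_lt_one.trans hv).ne').2 hv
      rw [WithZero.log_one] at h
      exact h.ne'
    · change addVal v (mon n) = _ at hr
      rw [addVal_of_ne v (hne n), WithTop.coe_inj] at hr
      subst hr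
      rw [neg_ne_zero, Int.cast_ne_zero] at hr0
      rw [abs_neg]
      exact_mod_cast Int.one_le_abs hr0
end
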